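/- Let n ≥ 2 be an integer and let i, j, k ∈ ℤ_n with i ≢ 0 and k ≢ 0 (mod n). Let a = 1 + xⁱ and b = xʲ + x^{j+k} in R = 𝔽₂[x]/(xⁿ−1) (both of weight two). Then the girth of the Tanner graph T(a,b) is at most 8. -/

import Mathlib

open Polynomial

noncomputable section

/-- `R2 n` is the ring `𝔽₂[x]/(xⁿ − 1)`. -/
abbrev R2 (n : ℕ) : Type := AdjoinRoot (X ^ n - 1 : (ZMod 2)[X])

/-- The image of `x` in `𝔽₂[x]/(xⁿ − 1)`. -/
def xR (n : ℕ) : R2 n := AdjoinRoot.root _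

/-- The quotient map `𝔽₂[x] → 𝔽₂[x]/(xⁿ − 1)`. -/
def mkR (n : ℕ) : (ZMod 2)[X] →+* R2 n := AdjoinRoot.mk _

lemma xR_pow_n (n : ℕ) : xR n ^ n = 1 := by
  have h : (AdjoinRoot.mk (X ^ n - 1 : (ZMod 2)[X])) (X ^ n - 1) = 0 := AdjoinRoot.mk_self
  rw [map_sub, map_pow, AdjoinRoot.mk_X, map_one, sub_eq_zero] at h
  exact h

/-- The unique representative of degree `< n` of an element of `𝔽₂[x]/(xⁿ − 1)` (junk if `n = 0`). -/
def repP {n : ℕ} (u : R2 n) : (ZMod 2)[X] :=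
  if h : n = 0 then 0
  else AdjoinRoot.modByMonicHom (by simpa using monic_X_pow_sub_C (1 : ZMod 2) h) u

/-- The Hamming weight of an element of `𝔽₂[x]/(xⁿ − 1)`: the number of nonzero coefficients
of its degree-`< n` representative. -/
def wt {n : ℕ} (u : R2 n) : ℕ := (repP u).support.card

/-- Coefficient of the degree-`< n` representative, indexed by `ℤ/n`. -/
def coeffZ {n : ℕ} (u : R2 n) (i : ZMod n) : ZMod 2 := (repP u).coeff i.val

/-- The X-stabilizer space `C₂(a,b) = {(r·a, r·b) : r ∈ R}` of the GB code of `(a,b)`. -/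
def C2set (n : ℕ) (a b : R2 n) : Set (R2 n × R2 n) := {p | ∃ r : R2 n, p = (r * a, r * b)}

/-- The space `C₁(a,b) = {(u,v) : u·b + v·a = 0}` of the GB code of `(a,b)`. -/
def C1set (n : ℕ) (a b : R2 n) : Set (R2 n × R2 n) := {p | p.1 * b + p.2 * a = 0}

/-- The (X-side) minimum distance of the GB code of `(a,b)`. -/
def dGB (n : ℕ) (a b : R2 n) : ℕ :=
  sInf {k | ∃ p ∈ C1set n a b \ C2set n a b, wt p.1 + wt p.2 = k}

/-- `P_m(x) = 1 + x + ⋯ + x^{m−1}` as a polynomial over `𝔽₂`. -/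
def PmP (m : ℕ) : (ZMod 2)[X] := ∑ i ∈ Finset.range m, X ^ i

/-- `P_m(x) = 1 + x + ⋯ + x^{m−1}` as an element of `𝔽₂[x]/(xⁿ − 1)`. -/
def PmR (n m : ℕ) : R2 n := ∑ i ∈ Finset.range m, xR n ^ i

/-- The ring endomorphism of `𝔽₂[x]/(xⁿ − 1)` induced by `x ↦ x^d`. -/
def substHom (n d : ℕ) : R2 n →+* R2 n :=
  AdjoinRoot.lift (algebraMap (ZMod 2) (R2 n)) (xR n ^ d) (by
    simp only [eval₂_sub, eval₂_X_pow, eval₂_one]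
    rw [← pow_mul, mul_comm d n, pow_mul, xR_pow_n, one_pow, sub_self])

/-- The Euclidean inner product on `𝔽₂²ⁿ`, in terms of pairs `(u₁, u₂)` of elements of
`𝔽₂[x]/(xⁿ − 1)` (representing the concatenated binary vector `(u₁ | u₂)`). -/
def eucInner (n : ℕ) (p q : R2 n × R2 n) : ZMod 2 :=
  ∑ i ∈ Finset.range n,
    ((repP p.1).coeff i * (repP q.1).coeff i + (repP p.2).coeff i * (repP q.2).coeff i)

/-- The symplectic inner product of `u₁ + w·u₂` and `v₁ + w·v₂`, i.e.
`Σᵢ (u₁ᵢ·v₂ᵢ + u₂ᵢ·v₁ᵢ)`, in terms of the pairs `(u₁,u₂)`, `(v₁,v₂)`. -/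
def sympInner (n : ℕ) (p q : R2 n × R2 n) : ZMod 2 :=
  ∑ i ∈ Finset.range n,
    ((repP p.1).coeff i * (repP q.2).coeff i + (repP p.2).coeff i * (repP q.1).coeff i)

/-- Euclidean dual of a set of (pairs representing) binary vectors of length `2n`. -/
def eucDual (n : ℕ) (S : Set (R2 n × R2 n)) : Set (R2 n × R2 n) :=
  {p | ∀ q ∈ S, eucInner n q p = 0}

/-- Symplectic dual of a set of (pairs representing) vectors of `𝔽₄ⁿ`. -/
def sympDual (n : ℕ) (S : Set (R2 n × R2 n)) : Set (R2 n × R2 n) :=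
  {p | ∀ q ∈ S, sympInner n q p = 0}

/-- Number of nonzero `𝔽₄`-coordinates of `u₁ + w·u₂`, in terms of the pair `(u₁,u₂)`. -/
def wt4 (n : ℕ) (p : R2 n × R2 n) : ℕ := ((repP p.1).support ∪ (repP p.2).support).card

/-- The `2n` binary coordinates of a pair `(u₁,u₂)`. -/
def coords {n : ℕ} (p : R2 n × R2 n) : (Fin n ⊕ Fin n) → ZMod 2 :=
  Sum.elim (fun i => (repP p.1).coeff i) (fun i => (repP p.2).coeff i)

/-- Vertex set of the Tanner graph: check vertices `x_t` (left) and data vertices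
`q_s`, `q'_s` (right). -/
def TV (n : ℕ) : Type := (ZMod n) ⊕ ((ZMod n) ⊕ (ZMod n))

/-- `trel a b v w` holds iff `v` is a check vertex `x_t`, `w` is a data vertex, and they are
connected: `x_t ~ q_s` iff `a_{s−t} = 1`, and `x_t ~ q'_s` iff `b_{s−t} = 1`. -/
def trel {n : ℕ} (a b : R2 n) (v w : TV n) : Prop :=
  ∃ t s : ZMod n, v = Sum.inl t ∧
    ((w = Sum.inr (Sum.inl s) ∧ coeffZ a (s - t) = 1) ∨
     (w = Sum.inr (Sum.inr s) ∧ coeffZ b (s - t) = 1))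

/-- The Tanner graph `T(a,b)` of the GB code of `(a,b)`. -/
def tanner (n : ℕ) (a b : R2 n) : SimpleGraph (TV n) where
  Adj v w := trel a b v w ∨ trel a b w v
  symm := ⟨fun v w h => Or.symm h⟩
  loopless := by
    constructor
    rintro v (⟨t, s, hv, hw⟩ | ⟨t, s, hv, hw⟩) <;>
      rcases hw with ⟨hw, -⟩ | ⟨hw, -⟩ <;> (subst hv; simp at hw)

end

noncomputable section

/-!
Let `a` have coefficient `1` at `i ≠ i'` and `b` at `j ≠ j'`. From any check vertex `x_t` one
reaches `x_{t + i - i'}` through a data vertex `q`, and `x_{t + j - j'}` through a data vertex `q'`.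
The two translations commute, so their commutator is a closed walk of length `8` from `x_0`. Its
check vertices may coincide, but its four data vertices are distinct and each is entered and left
along different edges. Hence no edge is repeated and the walk contains a cycle.
-/

section AlternatingWalk

variable {V : Type*} {G : SimpleGraph V}

lemma exists_walk_edges_eq_flatMap {x q : ℕ → V} (hxq : ∀ i, G.Adj (x i) (q i))
    (hqx : ∀ i, G.Adj (q i) (x (i + 1))) (m : ℕ) :
    ∃ w : G.Walk (x 0) (x m),
      w.edges = (List.range m).flatMap fun i ↦ [s(x i, q i), s(q i, x (i + 1))] := by
  induction m with
  | zero => exact ⟨.nil, rfl⟩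
  | succ m ih =>
    obtain ⟨w, hw⟩ := ih
    refine ⟨w.append (.cons (hxq m) (.cons (hqx m) .nil)), ?_⟩
    simp [SimpleGraph.Walk.edges_append, hw, List.range_succ]

lemma nodup_flatMap_alternating_edges {x q : ℕ → V} {m : ℕ} (hdisj : ∀ i j, x i ≠ q j)
    (hq : Set.InjOn q (Set.Iio m)) (hx : ∀ i, x i ≠ x (i + 1)) :
    ((List.range m).flatMap fun i ↦ [s(x i, q i), s(q i, x (i + 1))]).Nodup := by
  refine List.nodup_flatMap.2 ⟨fun i _ ↦ ?_, List.nodup_range.pairwise_of_forall_ne ?_⟩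
  · simp [hdisj, hx]
  · intro i hi j hj hij
    have hqij : q j ≠ q i := hq.ne (List.mem_range.1 hj) (List.mem_range.1 hi) hij.symm
    simp [Function.onFun, hdisj, (hdisj _ _).symm, hqij]

theorem egirth_le_two_mul_of_alternating {m : ℕ} [NeZero m] {x q : Fin m → V}
    (hxq : ∀ i, G.Adj (x i) (q i)) (hqx : ∀ i, G.Adj (q i) (x (i + 1)))
    (hdisj : ∀ i j, x i ≠ q j) (hq : Function.Injective q) (hx : ∀ i, x i ≠ x (i + 1)) :
    G.egirth ≤ 2 * m := by
  have ofNat_succ (i : ℕ) : Fin.ofNat m (i + 1) = Fin.ofNat m i + 1 := by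
    ext; simp [Fin.val_add]
  have ofNat_injOn : Set.InjOn (Fin.ofNat m) (Set.Iio m) := fun i hi j hj hij ↦ by
    simpa [Nat.mod_eq_of_lt hi, Nat.mod_eq_of_lt hj] using congrArg Fin.val hij
  have hclosed : x (Fin.ofNat m m) = x (Fin.ofNat m 0) := by
    congr 1; ext; simp
  obtain ⟨w, hw⟩ := exists_walk_edges_eq_flatMap (x := x ∘ Fin.ofNat m) (q := q ∘ Fin.ofNat m)
    (fun _ ↦ hxq _) (fun i ↦ by simpa only [Function.comp_apply, ofNat_succ] using hqx _) m
  have hnodup : w.edges.Nodup := hw ▸ nodup_flatMap_alternating_edges (fun _ _ ↦ hdisj _ _)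
    (hq.comp_injOn ofNat_injOn) fun i ↦ by simpa only [Function.comp_apply, ofNat_succ] using hx _
  have hlength : w.length = 2 * m := by
    simp [← SimpleGraph.Walk.length_edges, hw, mul_comm]
  have hcircuit : (w.copy rfl hclosed).IsCircuit :=
    { edges_nodup := by rwa [SimpleGraph.Walk.edges_copy]
      ne_nil := fun h ↦ by simpa [hlength, NeZero.ne m] using congrArg SimpleGraph.Walk.length h }
  simpa [hlength] using hcircuit.egirth_le_length

end AlternatingWalk

section XPowSubOne

variable {R : Type*} [Ring R] {n : ℕ}

lemma monic_X_pow_sub_one (hn : n ≠ 0) : (X ^ n - 1 : R[X]).Monic := by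
  simpa using monic_X_pow_sub_C (1 : R) hn

lemma degree_X_pow_sub_one [Nontrivial R] (hn : n ≠ 0) : (X ^ n - 1 : R[X]).degree = n := by
  simpa using degree_X_pow_sub_C (Nat.pos_of_ne_zero hn) (1 : R)

end XPowSubOne

section Representatives

variable {n : ℕ}

lemma repP_mkR (hn : n ≠ 0) (p : (ZMod 2)[X]) : repP (mkR n p) = p %ₘ (X ^ n - 1) := by
  rw [repP, dif_neg hn, mkR, AdjoinRoot.modByMonicHom_mk]

lemma repP_mkR_of_degree_lt (hn : n ≠ 0) {p : (ZMod 2)[X]} (hp : p.degree < n) :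
    repP (mkR n p) = p := by
  rwa [repP_mkR hn, modByMonic_eq_self_iff (monic_X_pow_sub_one hn), degree_X_pow_sub_one hn]

lemma degree_repP_lt (hn : n ≠ 0) (u : R2 n) : (repP u).degree < n := by
  obtain ⟨p, rfl⟩ : ∃ p, mkR n p = u := AdjoinRoot.mk_surjective u
  rw [repP_mkR hn, ← degree_X_pow_sub_one (R := ZMod 2) hn]
  exact degree_modByMonic_lt p (monic_X_pow_sub_one hn)

lemma mkR_X : mkR n X = xR n := AdjoinRoot.mk_X

lemma wt_xR_pow_add_xR_pow {k l : ℕ} (hk : k < n) (hl : l < n) (hkl : k ≠ l) :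
    wt (xR n ^ k + xR n ^ l) = 2 := by
  have hdegree : (X ^ k + X ^ l : (ZMod 2)[X]).degree < n :=
    (degree_add_le _ _).trans_lt (max_lt (by simpa using hk) (by simpa using hl))
  have hrep : repP (xR n ^ k + xR n ^ l) = X ^ k + X ^ l := by
    simpa [mkR_X] using repP_mkR_of_degree_lt (by omega) hdegree
  simpa [wt, hrep] using card_support_binomial hkl (one_ne_zero' (ZMod 2)) (one_ne_zero' (ZMod 2))

lemma exists_ne_coeffZ_eq_one_of_one_lt_wt {u : R2 n} (hu : 1 < wt u) :
    ∃ s s' : ZMod n, s ≠ s' ∧ coeffZ u s = 1 ∧ coeffZ u s' = 1 := by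
  have hn : NeZero n := ⟨by rintro rfl; simp [wt, repP] at hu⟩
  have eq_one_of_ne_zero : ∀ c : ZMod 2, c ≠ 0 → c = 1 := by decide
  have val_eq {k : ℕ} (hk : k ∈ (repP u).support) : (k : ZMod n).val = k :=
    ZMod.val_natCast_of_lt <| by
      exact_mod_cast (le_degree_of_mem_supp k hk).trans_lt (degree_repP_lt hn.out u)
  have coeffZ_eq {k : ℕ} (hk : k ∈ (repP u).support) : coeffZ u (k : ZMod n) = 1 := by
    rw [coeffZ, val_eq hk]
    exact eq_one_of_ne_zero _ (mem_support_iff.1 hk)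
  obtain ⟨k, hk, l, hl, hkl⟩ := Finset.one_lt_card.1 hu
  refine ⟨k, l, fun h ↦ hkl ?_, coeffZ_eq hk, coeffZ_eq hl⟩
  rw [← val_eq hk, h, val_eq hl]

end Representatives

section Tanner

variable {n : ℕ} {a b : R2 n}

/-- The check vertex `x_t` of the Tanner graph. -/
def TV.check (t : ZMod n) : TV n := .inl t

/-- The data vertex `q_s` of the Tanner graph, joined to check vertices according to `a`. -/
def TV.dataA (s : ZMod n) : TV n := .inr (.inl s)

/-- The data vertex `q'_s` of the Tanner graph, joined to check vertices according to `b`. -/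
def TV.dataB (s : ZMod n) : TV n := .inr (.inr s)

open TV

lemma tanner_adj_check_dataA {t s : ZMod n} :
    (tanner n a b).Adj (check t) (dataA s) ↔ coeffZ a (s - t) = 1 := by
  unfold tanner trel check dataA TV
  simp

lemma tanner_adj_check_dataB {t s : ZMod n} :
    (tanner n a b).Adj (check t) (dataB s) ↔ coeffZ b (s - t) = 1 := by
  unfold tanner trel check dataB TV
  simp

theorem tanner_egirth_le_eight_of_coeffZ {i i' j j' : ZMod n} (hi : i ≠ i') (hj : j ≠ j')
    (hai : coeffZ a i = 1) (hai' : coeffZ a i' = 1)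
    (hbj : coeffZ b j = 1) (hbj' : coeffZ b j' = 1) :
    (tanner n a b).egirth ≤ 8 := by
  let x : Fin 4 → TV n :=
    ![check 0, check (i - i'), check (i - i' + (j - j')), check (j - j')]
  let q : Fin 4 → TV n :=
    ![dataA i, dataB (i - i' + j), dataA (i + (j - j')), dataB j]
  have hxq : ∀ m, (tanner n a b).Adj (x m) (q m) := by
    simp [Fin.forall_fin_succ, x, q, tanner_adj_check_dataA, tanner_adj_check_dataB, *]
  have hqx : ∀ m, (tanner n a b).Adj (q m) (x (m + 1)) := by
    simp [Fin.forall_fin_succ, x, q, (tanner n a b).adj_comm (dataA _),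
      (tanner n a b).adj_comm (dataB _), tanner_adj_check_dataA, tanner_adj_check_dataB, *]
  have hdisj : ∀ m m', x m ≠ q m' := by
    unfold x q check dataA dataB TV
    simp [Fin.forall_fin_succ]
  have hq : Function.Injective q := by
    unfold q dataA dataB TV
    simp [Function.Injective, Fin.forall_fin_succ, sub_eq_zero, hi, hj]
  have hx : ∀ m, x m ≠ x (m + 1) := by
    unfold x check TV
    simp [Fin.forall_fin_succ, sub_eq_zero, hi, hj, (sub_ne_zero.2 hi).symm]
  exact egirth_le_two_mul_of_alternating hxq hqx hdisj hq hx

end Tanner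

theorem stmt_17_general (n : ℕ) (a b : R2 n) (ha : 2 ≤ wt a) (hb : 2 ≤ wt b) :
    (tanner n a b).egirth ≤ 8 := by
  obtain ⟨i, i', hi, hai, hai'⟩ := exists_ne_coeffZ_eq_one_of_one_lt_wt ha
  obtain ⟨j, j', hj, hbj, hbj'⟩ := exists_ne_coeffZ_eq_one_of_one_lt_wt hb
  exact tanner_egirth_le_eight_of_coeffZ hi hj hai hai' hbj hbj'

/-- For `a = 1 + xⁱ` and `b = xʲ + x^{j+k}` of weight two
(`i ≢ 0`, `k ≢ 0 (mod n)`, `n ≥ 2`), the Tanner graph `T(a,b)` has girth at most `8`. -/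
theorem stmt_17 (n : ℕ) (hn : 2 ≤ n) (i j k : ZMod n) (hi : i ≠ 0) (hk : k ≠ 0)
    (a b : R2 n) (ha : a = 1 + xR n ^ i.val) (hb : b = xR n ^ j.val + xR n ^ (j + k).val) :
    (tanner n a b).egirth ≤ 8 := by
  have : NeZero n := ⟨by omega⟩
  have wt_a : wt (1 + xR n ^ i.val) = 2 := by
    simpa using wt_xR_pow_add_xR_pow (NeZero.pos n) i.val_lt ((ZMod.val_ne_zero i).2 hi).symm
  have wt_b : wt (xR n ^ j.val + xR n ^ (j + k).val) = 2 :=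
    wt_xR_pow_add_xR_pow j.val_lt (j + k).val_lt ((ZMod.val_injective n).ne (by simpa using hk))
  exact stmt_17_general n a b (ha ▸ wt_a.ge) (hb ▸ wt_b.ge)

end
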